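/- arXiv:2403.19694 — 7 statements merged into one kernel-verified Lean document; each statement's English description precedes it below -/
import Mathlib

section
/- Let X, Y, Z, W be rational numbers satisfying X^4 + Y^4 = Z^4 + W^4, and let p, q, r, s be rational numbers satisfying the three equations X^4*p + Y^4*q - Z^4*r - W^4*s = 0, X^4*p^2 + Y^4*q^2 - Z^4*r^2 - W^4*s^2 = 0, and p + q + r + s = 0. Then X^4*p^4 + Y^4*q^4 - Z^4*r^4 - W^4*s^4 = 0; consequently (pX, qY, rZ, sW) is again a solution of the equation x^4 + y^4 = z^4 + w^4. -/
/-!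
Fix weights `w i` and nodes `x i`. The functional `g ↦ ∑ i, w i * g (x i)` on polynomials kills
every polynomial vanishing at all the nodes, in particular `∏ i, (T - x i)`, and its values on the
powers of `T` are the weighted power sums of the nodes. Take the nodes `p, q, r, s` with weights
`X ^ 4, Y ^ 4, -Z ^ 4, -W ^ 4`. The quartic `(T - p) * (T - q) * (T - r) * (T - s)` has no cubic
term, because `p + q + r + s = 0`, and the power sums of exponents `0, 1, 2` vanish: these are the
equations of the surface, the tangent plane and the inflectional tangents. Hence the power sum of
exponent `4` vanishes as well.
-/

section WeightedPowerSums

open Polynomial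

theorem sum_mul_eval_eq_sum_coeff_mul {ι R : Type*} [CommSemiring R] (t : Finset ι) (w x : ι → R)
    (f : R[X]) :
    ∑ i ∈ t, w i * f.eval (x i) =
      ∑ k ∈ Finset.range (f.natDegree + 1), f.coeff k * ∑ i ∈ t, w i * x i ^ k := by
  simp only [eval_eq_sum_range, Finset.mul_sum]
  rw [Finset.sum_comm]
  simp only [mul_left_comm]

variable {ι R : Type*} [CommRing R] {t : Finset ι} {w x : ι → R}

theorem sum_mul_pow_natDegree_eq_neg_nextCoeff_mul {f : R[X]} (hf : f.Monic)
    (hroot : ∀ i ∈ t, f.IsRoot (x i))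
    (hlow : ∀ k, k + 1 < f.natDegree → ∑ i ∈ t, w i * x i ^ k = 0) :
    ∑ i ∈ t, w i * x i ^ f.natDegree =
      -f.nextCoeff * ∑ i ∈ t, w i * x i ^ (f.natDegree - 1) := by
  have heval : ∑ i ∈ t, w i * f.eval (x i) = 0 :=
    Finset.sum_eq_zero fun i hi => by rw [(hroot i hi).eq_zero, mul_zero]
  rw [sum_mul_eval_eq_sum_coeff_mul, Finset.sum_range_succ, hf.coeff_natDegree, one_mul] at heval
  rcases hdeg : f.natDegree with _ | n
  · simpa [hdeg, nextCoeff] using heval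
  · have hlow_sum : ∑ k ∈ Finset.range n, f.coeff k * ∑ i ∈ t, w i * x i ^ k = 0 :=
      Finset.sum_eq_zero fun k hk => by
        rw [hlow k (by rw [hdeg]; simpa using hk), mul_zero]
    rw [hdeg, Finset.sum_range_succ, hlow_sum, zero_add] at heval
    rw [nextCoeff_of_natDegree_pos (by lia), hdeg, Nat.add_sub_cancel]
    linear_combination heval

theorem sum_mul_pow_card_eq_sum_mul (hlow : ∀ k, k + 1 < t.card → ∑ i ∈ t, w i * x i ^ k = 0) :
    ∑ i ∈ t, w i * x i ^ t.card = (∑ i ∈ t, x i) * ∑ i ∈ t, w i * x i ^ (t.card - 1) := by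
  nontriviality R
  have hdeg : (∏ i ∈ t, (X - C (x i))).natDegree = t.card :=
    natDegree_finsetProd_X_sub_C_eq_card t x
  have hroot : ∀ i ∈ t, (∏ j ∈ t, (X - C (x j))).IsRoot (x i) := fun i hi => by
    rw [IsRoot, eval_prod]
    exact Finset.prod_eq_zero hi (by simp)
  have h := sum_mul_pow_natDegree_eq_neg_nextCoeff_mul (w := w)
    (monic_prod_X_sub_C x t) hroot (by rwa [hdeg])
  rwa [hdeg, prod_X_sub_C_nextCoeff, neg_neg] at h

end WeightedPowerSums

theorem richmond_fourth_power_general {R : Type*} [CommRing R] {X Y Z W p q r s : R}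
    (hXYZW : X ^ 4 + Y ^ 4 = Z ^ 4 + W ^ 4)
    (h1 : X ^ 4 * p + Y ^ 4 * q - Z ^ 4 * r - W ^ 4 * s = 0)
    (h2 : X ^ 4 * p ^ 2 + Y ^ 4 * q ^ 2 - Z ^ 4 * r ^ 2 - W ^ 4 * s ^ 2 = 0)
    (h3 : p + q + r + s = 0) :
    X ^ 4 * p ^ 4 + Y ^ 4 * q ^ 4 - Z ^ 4 * r ^ 4 - W ^ 4 * s ^ 4 = 0 ∧
      (p * X) ^ 4 + (q * Y) ^ 4 = (r * Z) ^ 4 + (s * W) ^ 4 := by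
  let w : Fin 4 → R := ![X ^ 4, Y ^ 4, -Z ^ 4, -W ^ 4]
  let x : Fin 4 → R := ![p, q, r, s]
  have hpowerSum (k : ℕ) :
      ∑ i, w i * x i ^ k = X ^ 4 * p ^ k + Y ^ 4 * q ^ k - Z ^ 4 * r ^ k - W ^ 4 * s ^ k := by
    simp [w, x, Fin.sum_univ_four, sub_eq_add_neg]
  have hnodes : ∑ i, x i = 0 := by simpa [x, Fin.sum_univ_four] using h3
  have hlow : ∀ k, k + 1 < (Finset.univ : Finset (Fin 4)).card → ∑ i, w i * x i ^ k = 0 := by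
    intro k hk
    replace hk : k < 3 := by rw [Finset.card_fin] at hk; lia
    rw [hpowerSum]
    interval_cases k
    · linear_combination hXYZW
    · linear_combination h1
    · exact h2
  have h4 : X ^ 4 * p ^ 4 + Y ^ 4 * q ^ 4 - Z ^ 4 * r ^ 4 - W ^ 4 * s ^ 4 = 0 := by
    simpa only [Finset.card_fin, hpowerSum, hnodes, zero_mul] using sum_mul_pow_card_eq_sum_mul hlow
  exact ⟨h4, by linear_combination h4⟩

theorem richmond_fourth_power (X Y Z W p q r s : ℚ)
    (hXYZW : X^4 + Y^4 = Z^4 + W^4)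
    (h1 : X^4*p + Y^4*q - Z^4*r - W^4*s = 0)
    (h2 : X^4*p^2 + Y^4*q^2 - Z^4*r^2 - W^4*s^2 = 0)
    (h3 : p + q + r + s = 0) :
    X^4*p^4 + Y^4*q^4 - Z^4*r^4 - W^4*s^4 = 0 ∧
    (p*X)^4 + (q*Y)^4 = (r*Z)^4 + (s*W)^4 :=
  richmond_fourth_power_general hXYZW h1 h2 h3
end

section
/- Let X, Y, Z, W, p, q be rational numbers with X^4 + Y^4 - Z^4 - W^4 = 0 and W^4 - Z^4 ≠ 0, and let r = -((X^4 + W^4)*p + (W^4 + Y^4)*q)/(W^4 - Z^4) and s = ((X^4 + Z^4)*p + (Y^4 + Z^4)*q)/(W^4 - Z^4). Then the equation X^4*p^2 + Y^4*q^2 - Z^4*r^2 - W^4*s^2 = 0 holds if and only if A*p^2 + B*p*q + C*q^2 = 0, where A = (W^4 + Z^4)*X^8 - (W^8 - 6*W^4*Z^4 + Z^8)*X^4 + W^4*Z^4*(W^4 + Z^4), B = (2*W^4*Y^4 + 4*W^4*Z^4 + 2*Y^4*Z^4)*X^4 + 2*W^4*Z^4*(W^4 + 2*Y^4 + Z^4),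 and C = (W^4 + Z^4)*Y^8 - (W^8 - 6*W^4*Z^4 + Z^8)*Y^4 + W^4*Z^4*(W^4 + Z^4). -/
/-!
Only the fourth powers `a = X ^ 4`, `b = Y ^ 4`, `c = Z ^ 4`, `d = W ^ 4` matter. The equations
`p + q + r + s = 0` and `a * p + b * q - c * r - d * s = 0` express `(d - c) * r` and `(d - c) * s`
as linear forms in `p` and `q`, so multiplying the inflectional condition by `(d - c) ^ 2` turns it
into a binary quadratic form in `p` and `q`.
-/

section CommRing

variable {R : Type*} [CommRing R]

/-- The coefficient of `p ^ 2` in the quadratic form of Richmond's construction, as a function of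
the fourth powers `a = X ^ 4`, `c = Z ^ 4`, `d = W ^ 4`. The coefficient of `q ^ 2` is the same
function with `a` replaced by `b = Y ^ 4`. -/
def inflectionalSqCoeff (a c d : R) : R :=
  (d + c) * a ^ 2 - (d ^ 2 - 6 * d * c + c ^ 2) * a + d * c * (d + c)

/-- The coefficient of `p * q` in the quadratic form of Richmond's construction, as a function of
the fourth powers `a = X ^ 4`, `b = Y ^ 4`, `c = Z ^ 4`, `d = W ^ 4`. -/
def inflectionalCrossCoeff (a b c d : R) : R :=
  (2 * d * b + 4 * d * c + 2 * b * c) * a + 2 * d * c * (d + 2 * b + c)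

theorem inflectionalSqCoeff_eq (a c d : R) :
    inflectionalSqCoeff a c d = c * (a + d) ^ 2 + d * (a + c) ^ 2 - a * (d - c) ^ 2 := by
  rw [inflectionalSqCoeff]
  ring

theorem inflectionalCrossCoeff_eq (a b c d : R) :
    inflectionalCrossCoeff a b c d =
      2 * (c * ((a + d) * (d + b)) + d * ((a + c) * (b + c))) := by
  rw [inflectionalCrossCoeff]
  ring

variable {a b c d p q r s : R}

theorem sub_mul_eq_of_linear_system (hsum : p + q + r + s = 0)
    (htangent : a * p + b * q - c * r - d * s = 0) :
    (d - c) * r = -((a + d) * p + (d + b) * q) ∧ (d - c) * s = (a + c) * p + (b + c) * q :=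
  ⟨by linear_combination d * hsum + htangent, by linear_combination -c * hsum - htangent⟩

theorem sub_sq_mul_inflectional_eq_neg (hsum : p + q + r + s = 0)
    (htangent : a * p + b * q - c * r - d * s = 0) :
    (d - c) ^ 2 * (a * p ^ 2 + b * q ^ 2 - c * r ^ 2 - d * s ^ 2) =
      -(inflectionalSqCoeff a c d * p ^ 2 + inflectionalCrossCoeff a b c d * p * q +
        inflectionalSqCoeff b c d * q ^ 2) := by
  obtain ⟨hr, hs⟩ := sub_mul_eq_of_linear_system hsum htangent
  calc
    (d - c) ^ 2 * (a * p ^ 2 + b * q ^ 2 - c * r ^ 2 - d * s ^ 2)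
    _ = (d - c) ^ 2 * (a * p ^ 2 + b * q ^ 2) - c * ((d - c) * r) ^ 2 - d * ((d - c) * s) ^ 2 := by
      ring
    _ = (d - c) ^ 2 * (a * p ^ 2 + b * q ^ 2) - c * ((a + d) * p + (d + b) * q) ^ 2 -
        d * ((a + c) * p + (b + c) * q) ^ 2 := by
      rw [hr, hs, neg_sq]
    _ = -(inflectionalSqCoeff a c d * p ^ 2 + inflectionalCrossCoeff a b c d * p * q +
        inflectionalSqCoeff b c d * q ^ 2) := by
      simp only [inflectionalSqCoeff_eq, inflectionalCrossCoeff_eq]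
      ring

theorem inflectional_condition_quadratic_general [NoZeroDivisors R] (hdc : d - c ≠ 0)
    (hsum : p + q + r + s = 0) (htangent : a * p + b * q - c * r - d * s = 0) :
    a * p ^ 2 + b * q ^ 2 - c * r ^ 2 - d * s ^ 2 = 0 ↔
      inflectionalSqCoeff a c d * p ^ 2 + inflectionalCrossCoeff a b c d * p * q +
        inflectionalSqCoeff b c d * q ^ 2 = 0 := by
  rw [← mul_eq_zero_iff_left (pow_ne_zero 2 hdc), sub_sq_mul_inflectional_eq_neg hsum htangent,
    neg_eq_zero]

end CommRing

theorem linear_system_of_eq_div {K : Type*} [Field K] {a b c d p q r s : K} (hdc : d - c ≠ 0)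
    (hr : r = -((a + d) * p + (d + b) * q) / (d - c))
    (hs : s = ((a + c) * p + (b + c) * q) / (d - c)) :
    p + q + r + s = 0 ∧ a * p + b * q - c * r - d * s = 0 := by
  rw [eq_div_iff hdc] at hr hs
  constructor <;> apply mul_right_cancel₀ hdc
  · linear_combination hr + hs
  · linear_combination -c * hr - d * hs

theorem inflectional_condition_quadratic (X Y Z W p q : ℚ)
    (hXYZW : X^4 + Y^4 - Z^4 - W^4 = 0) (h : W^4 - Z^4 ≠ 0)
    (r s : ℚ)
    (hr : r = -((X^4 + W^4)*p + (W^4 + Y^4)*q)/(W^4 - Z^4))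
    (hs : s = ((X^4 + Z^4)*p + (Y^4 + Z^4)*q)/(W^4 - Z^4))
    (A B C : ℚ)
    (hA : A = (W^4 + Z^4)*X^8 - (W^8 - 6*W^4*Z^4 + Z^8)*X^4 + W^4*Z^4*(W^4 + Z^4))
    (hB : B = (2*W^4*Y^4 + 4*W^4*Z^4 + 2*Y^4*Z^4)*X^4 + 2*W^4*Z^4*(W^4 + 2*Y^4 + Z^4))
    (hC : C = (W^4 + Z^4)*Y^8 - (W^8 - 6*W^4*Z^4 + Z^8)*Y^4 + W^4*Z^4*(W^4 + Z^4)) :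
    X^4*p^2 + Y^4*q^2 - Z^4*r^2 - W^4*s^2 = 0 ↔ A*p^2 + B*p*q + C*q^2 = 0 := by
  obtain ⟨hsum, htangent⟩ := linear_system_of_eq_div h hr hs
  simpa only [hA, hB, hC, inflectionalSqCoeff, inflectionalCrossCoeff, ← pow_mul, Nat.reduceMul]
    using inflectional_condition_quadratic_general h hsum htangent
end

section
/- Let X, Y, Z, W be rational numbers satisfying X^4 + Y^4 - Z^4 - W^4 = 0, and set A = (W^4 + Z^4)*X^8 - (W^8 - 6*W^4*Z^4 + Z^8)*X^4 + W^4*Z^4*(W^4 + Z^4), B = (2*W^4*Y^4 + 4*W^4*Z^4 + 2*Y^4*Z^4)*X^4 + 2*W^4*Z^4*(W^4 + 2*Y^4 + Z^4), and C = (W^4 + Z^4)*Y^8 - (W^8 - 6*W^4*Z^4 + Z^8)*Y^4 + W^4*Z^4*(W^4 + Z^4). Then the discriminant of the quadratic form A*p^2 + B*p*q + C*q^2 with respect to p satisfies B^2 - 4*A*C = 64*X^4*Y^4*Z^4*W^4*(W^4 - Z^4)^2, so that in particular the discriminant is a perfect square of a rational number. -/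
/-!
Put `x = X⁴`, `y = Y⁴`, `z = Z⁴`, `w = W⁴`, so that `x + y = z + w =: s`, and let `n = x * y`,
`m = z * w`. Since `x` and `y` are roots of `t² - s * t + n`, the coefficients `A` and `C` reduce
to linear expressions `s * (m - n) + 8 * m * t` at `t = x` and `t = y`, while
`B = 2 * s * (n + 3 * m)`. The discriminant is then `64 * m * n * (s² - 4 * m)`, and
`s² - 4 * m = (w - z)²`.
-/

section Richmond

variable {R : Type*} [CommRing R]

/-- The coefficient of `p ^ 2` (at `t = X ^ 4`) and of `q ^ 2` (at `t = Y ^ 4`) in Richmond's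
quadratic form, as a function of the fourth powers `z = Z ^ 4` and `w = W ^ 4`. -/
def richmondOuterCoeff (t z w : R) : R :=
  (w + z) * t ^ 2 - (w ^ 2 - 6 * w * z + z ^ 2) * t + w * z * (w + z)

/-- The coefficient of `p * q` in Richmond's quadratic form, as a function of the fourth powers
`x = X ^ 4`, `y = Y ^ 4`, `z = Z ^ 4` and `w = W ^ 4`. -/
def richmondMiddleCoeff (x y z w : R) : R :=
  (2 * w * y + 4 * w * z + 2 * y * z) * x + 2 * w * z * (w + 2 * y + z)

variable {x y z w : R}

theorem richmondOuterCoeff_eq_of_add_eq_add (h : x + y = z + w) :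
    richmondOuterCoeff x z w = (x + y) * (z * w - x * y) + 8 * (z * w) * x := by
  have sq_eq : x ^ 2 = (z + w) * x - x * y := by rw [← h]; ring
  rw [richmondOuterCoeff, sq_eq, h]
  ring

theorem richmondMiddleCoeff_eq_of_add_eq_add (h : x + y = z + w) :
    richmondMiddleCoeff x y z w = 2 * (x + y) * (x * y + 3 * (z * w)) := by
  calc richmondMiddleCoeff x y z w
      = 2 * (z + w) * (x * y) + 4 * (z * w) * (x + y) + 2 * (z * w) * (z + w) := by
        rw [richmondMiddleCoeff]; ring
    _ = 2 * (x + y) * (x * y + 3 * (z * w)) := by rw [← h]; ring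

theorem discrim_reduced_richmond (x y m : R) :
    discrim ((x + y) * (m - x * y) + 8 * m * x) (2 * (x + y) * (x * y + 3 * m))
        ((x + y) * (m - x * y) + 8 * m * y) =
      64 * m * (x * y) * ((x + y) ^ 2 - 4 * m) := by
  rw [discrim]
  ring

theorem discrim_richmond_of_add_eq_add (h : x + y = z + w) :
    discrim (richmondOuterCoeff x z w) (richmondMiddleCoeff x y z w) (richmondOuterCoeff y z w) =
      64 * x * y * z * w * (w - z) ^ 2 := by
  have hC : richmondOuterCoeff y z w = (x + y) * (z * w - x * y) + 8 * (z * w) * y := by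
    rw [richmondOuterCoeff_eq_of_add_eq_add ((add_comm y x).trans h), add_comm y x, mul_comm y x]
  rw [richmondOuterCoeff_eq_of_add_eq_add h, richmondMiddleCoeff_eq_of_add_eq_add h, hC,
    discrim_reduced_richmond, h]
  ring

theorem discriminant_is_square_general (X Y Z W : R)
    (hXYZW : X ^ 4 + Y ^ 4 - Z ^ 4 - W ^ 4 = 0) (A B C : R)
    (hA : A = (W ^ 4 + Z ^ 4) * X ^ 8 - (W ^ 8 - 6 * W ^ 4 * Z ^ 4 + Z ^ 8) * X ^ 4
      + W ^ 4 * Z ^ 4 * (W ^ 4 + Z ^ 4))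
    (hB : B = (2 * W ^ 4 * Y ^ 4 + 4 * W ^ 4 * Z ^ 4 + 2 * Y ^ 4 * Z ^ 4) * X ^ 4
      + 2 * W ^ 4 * Z ^ 4 * (W ^ 4 + 2 * Y ^ 4 + Z ^ 4))
    (hC : C = (W ^ 4 + Z ^ 4) * Y ^ 8 - (W ^ 8 - 6 * W ^ 4 * Z ^ 4 + Z ^ 8) * Y ^ 4
      + W ^ 4 * Z ^ 4 * (W ^ 4 + Z ^ 4)) :
    B ^ 2 - 4 * A * C = 64 * X ^ 4 * Y ^ 4 * Z ^ 4 * W ^ 4 * (W ^ 4 - Z ^ 4) ^ 2 ∧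
      ∃ d : R, B ^ 2 - 4 * A * C = d ^ 2 := by
  have hsum : X ^ 4 + Y ^ 4 = Z ^ 4 + W ^ 4 := by linear_combination hXYZW
  have hA' : A = richmondOuterCoeff (X ^ 4) (Z ^ 4) (W ^ 4) := by
    rw [hA, richmondOuterCoeff]; ring
  have hB' : B = richmondMiddleCoeff (X ^ 4) (Y ^ 4) (Z ^ 4) (W ^ 4) := hB
  have hC' : C = richmondOuterCoeff (Y ^ 4) (Z ^ 4) (W ^ 4) := by
    rw [hC, richmondOuterCoeff]; ring
  have hdisc : B ^ 2 - 4 * A * C =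
      64 * X ^ 4 * Y ^ 4 * Z ^ 4 * W ^ 4 * (W ^ 4 - Z ^ 4) ^ 2 := by
    rw [hA', hB', hC']
    exact discrim_richmond_of_add_eq_add hsum
  refine ⟨hdisc, 8 * X ^ 2 * Y ^ 2 * Z ^ 2 * W ^ 2 * (W ^ 4 - Z ^ 4), ?_⟩
  rw [hdisc]
  ring

end Richmond

theorem discriminant_is_square (X Y Z W : ℚ)
    (hXYZW : X^4 + Y^4 - Z^4 - W^4 = 0)
    (A B C : ℚ)
    (hA : A = (W^4 + Z^4)*X^8 - (W^8 - 6*W^4*Z^4 + Z^8)*X^4 + W^4*Z^4*(W^4 + Z^4))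
    (hB : B = (2*W^4*Y^4 + 4*W^4*Z^4 + 2*Y^4*Z^4)*X^4 + 2*W^4*Z^4*(W^4 + 2*Y^4 + Z^4))
    (hC : C = (W^4 + Z^4)*Y^8 - (W^8 - 6*W^4*Z^4 + Z^8)*Y^4 + W^4*Z^4*(W^4 + Z^4)) :
    B^2 - 4*A*C = 64*X^4*Y^4*Z^4*W^4*(W^4 - Z^4)^2 ∧
    ∃ d : ℚ, B^2 - 4*A*C = d^2 :=
  discriminant_is_square_general X Y Z W hXYZW A B C hA hB hC
end

section
/- In the polynomial ring ℤ[X, Y, Z, W], the polynomial X^4 + Y^4 - Z^4 - W^4 divides X1^4 + Y1^4 - Z1^4 - W1^4, where X1 = X*((W^4*Y^4 + 2*W^4*Z^4 + Y^4*Z^4)*X^4 + 4*W^2*X^2*Y^2*Z^2*(W^4 - Z^4) + W^4*Z^4*(W^4 + 2*Y^4 + Z^4)), Y1 = Y*((W^4 + Z^4)*X^8 - (W^8 - 6*W^4*Z^4 + Z^8)*X^4 + W^4*Z^4*(W^4 + Z^4)), Z1 = Z*(W^4*X^8 - 4*W^2*Y^2*Z^2*X^6 - (W^8 + 2*W^4*Y^4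 - 2*W^4*Z^4 - Y^4*Z^4)*X^4 - 4*W^6*Y^2*Z^2*X^2 - W^4*Y^4*Z^4), and W1 = W*(Z^4*X^8 + 4*W^2*Y^2*Z^2*X^6 + (W^4*Y^4 + 2*W^4*Z^4 - 2*Y^4*Z^4 - Z^8)*X^4 + 4*W^2*Y^2*Z^6*X^2 - W^4*Y^4*Z^4). -/
open MvPolynomial

/-!
Weight the coordinates of a point `(x, y, z, w)` of the surface by
`a = x ^ 4`, `q = y ^ 4`, `b = -z ^ 4`, `c = -w ^ 4`, so that `a + b + c + q = 0`.
A line through the point, in the direction `(x * u, 0, z * v, w * s)`, meets the surface with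
multiplicity three there as soon as `a * u + b * v + c * s = 0` and
`a * u ^ 2 + b * v ^ 2 + c * s ^ 2 = 0`. Such a direction is rational because the discriminant
`a * b * c * q` of these equations is the square of `t = x ^ 2 * y ^ 2 * z ^ 2 * w ^ 2`.
The fourth intersection of the line with the surface is then a new rational point.
-/

section Residual

variable {R : Type*} [CommRing R] {a b c q t u v s : R}

-- `u`, `v`, `s` are roots of a monic cubic: apply its linear recurrence to the weighted power sums.
lemma weighted_sum_pow_four_eq_of_isotropic (h₁ : a * u + b * v + c * s = 0)
    (h₂ : a * u ^ 2 + b * v ^ 2 + c * s ^ 2 = 0) :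
    a * u ^ 4 + b * v ^ 4 + c * s ^ 4 =
      (u + v + s) * (a * u ^ 3 + b * v ^ 3 + c * s ^ 3) := by
  linear_combination (u * v * s) * h₁ - (u * v + v * s + s * u) * h₂

/- The residual point on the line is `4 * (u, 0, v, s) - (u + v + s) * (1, 1, 1, 1)`, in
coordinates relative to the given point. -/
lemma weighted_sum_residual_pow_four (h₀ : a + b + c + q = 0) (h₁ : a * u + b * v + c * s = 0)
    (h₂ : a * u ^ 2 + b * v ^ 2 + c * s ^ 2 = 0) :
    a * (3 * u - v - s) ^ 4 + b * (3 * v - s - u) ^ 4 + c * (3 * s - u - v) ^ 4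
      + q * (-(u + v + s)) ^ 4 = 0 := by
  have h₄ := weighted_sum_pow_four_eq_of_isotropic h₁ h₂
  linear_combination (u + v + s) ^ 4 * h₀ - 16 * (u + v + s) ^ 3 * h₁
    + 96 * (u + v + s) ^ 2 * h₂ + 256 * h₄

/-- The coordinate of weight `a` of an asymptotic direction, relative to the given point, whose
coordinate of weight `q = -(a + b + c)` is zero; `t` is a square root of `a * b * c * q`.
The coordinates of weights `b` and `c` are obtained by cyclic permutation. -/
def asymptoticCoord (a b c t : R) : R :=
  b * c * (2 * a - b - c) + t * (b - c)

lemma weighted_sum_asymptoticCoord (a b c t : R) :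
    a * asymptoticCoord a b c t + b * asymptoticCoord b c a t
      + c * asymptoticCoord c a b t = 0 := by
  unfold asymptoticCoord
  ring

lemma weighted_sum_asymptoticCoord_sq (h₀ : a + b + c + q = 0) (ht : t ^ 2 = a * b * c * q) :
    a * asymptoticCoord a b c t ^ 2 + b * asymptoticCoord b c a t ^ 2
      + c * asymptoticCoord c a b t ^ 2 = 0 := by
  unfold asymptoticCoord
  linear_combination (a * (b - c) ^ 2 + b * (c - a) ^ 2 + c * (a - b) ^ 2)
    * (ht + a * b * c * h₀)

/-- The coordinate of weight `a`, relative to the given point, of the fourth intersection of the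
surface with the tangent line in the direction `asymptoticCoord`. The coordinates of weights `b`
and `c` are obtained by cyclic permutation. -/
def residualCoord (a b c t : R) : R :=
  3 * asymptoticCoord a b c t - asymptoticCoord b c a t - asymptoticCoord c a b t

/-- The coordinate of weight `q = -(a + b + c)` of the point with coordinates `residualCoord`;
it does not involve `t`. -/
def residualBaseCoord (a b c : R) : R :=
  (a + b + c) * (a * b + b * c + c * a) - 9 * a * b * c

lemma residualBaseCoord_eq_neg_sum (a b c t : R) :
    residualBaseCoord a b c =
      -(asymptoticCoord a b c t + asymptoticCoord b c a t + asymptoticCoord c a b t) := by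
  unfold residualBaseCoord asymptoticCoord
  ring

lemma weighted_sum_residualCoord_pow_four (h₀ : a + b + c + q = 0)
    (ht : t ^ 2 = a * b * c * q) :
    a * residualCoord a b c t ^ 4 + b * residualCoord b c a t ^ 4
      + c * residualCoord c a b t ^ 4 + q * residualBaseCoord a b c ^ 4 = 0 := by
  rw [residualBaseCoord_eq_neg_sum a b c t]
  exact weighted_sum_residual_pow_four h₀ (weighted_sum_asymptoticCoord a b c t)
    (weighted_sum_asymptoticCoord_sq h₀ ht)

end Residual

section NewSolution

variable {R : Type*} [CommRing R] {x y z w : R}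

lemma residual_solution (h : x ^ 4 + y ^ 4 = z ^ 4 + w ^ 4) :
    (x * residualCoord (x ^ 4) (-z ^ 4) (-w ^ 4) (x ^ 2 * y ^ 2 * z ^ 2 * w ^ 2)) ^ 4
      + (y * residualBaseCoord (x ^ 4) (-z ^ 4) (-w ^ 4)) ^ 4 =
    (z * residualCoord (-z ^ 4) (-w ^ 4) (x ^ 4) (x ^ 2 * y ^ 2 * z ^ 2 * w ^ 2)) ^ 4
      + (w * residualCoord (-w ^ 4) (x ^ 4) (-z ^ 4) (x ^ 2 * y ^ 2 * z ^ 2 * w ^ 2)) ^ 4 := by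
  have h₀ : x ^ 4 + -z ^ 4 + -w ^ 4 + y ^ 4 = 0 := by linear_combination h
  have ht : (x ^ 2 * y ^ 2 * z ^ 2 * w ^ 2) ^ 2 = x ^ 4 * -z ^ 4 * -w ^ 4 * y ^ 4 := by ring
  linear_combination weighted_sum_residualCoord_pow_four h₀ ht

lemma newX_eq_mul_residualCoord (h : x ^ 4 + y ^ 4 = z ^ 4 + w ^ 4) :
    x * ((w ^ 4 * y ^ 4 + 2 * w ^ 4 * z ^ 4 + y ^ 4 * z ^ 4) * x ^ 4
      + 4 * w ^ 2 * x ^ 2 * y ^ 2 * z ^ 2 * (w ^ 4 - z ^ 4)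
      + w ^ 4 * z ^ 4 * (w ^ 4 + 2 * y ^ 4 + z ^ 4)) =
    x * residualCoord (x ^ 4) (-z ^ 4) (-w ^ 4) (x ^ 2 * y ^ 2 * z ^ 2 * w ^ 2) := by
  unfold residualCoord asymptoticCoord
  linear_combination x * ((w ^ 4 + z ^ 4) * x ^ 4 + 2 * w ^ 4 * z ^ 4) * h

lemma newY_eq_neg_mul_residualBaseCoord (x y z w : R) :
    y * ((w ^ 4 + z ^ 4) * x ^ 8 - (w ^ 8 - 6 * w ^ 4 * z ^ 4 + z ^ 8) * x ^ 4
      + w ^ 4 * z ^ 4 * (w ^ 4 + z ^ 4)) =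
    -(y * residualBaseCoord (x ^ 4) (-z ^ 4) (-w ^ 4)) := by
  unfold residualBaseCoord
  ring

lemma newZ_eq_mul_residualCoord (h : x ^ 4 + y ^ 4 = z ^ 4 + w ^ 4) :
    z * (w ^ 4 * x ^ 8 - 4 * w ^ 2 * y ^ 2 * z ^ 2 * x ^ 6
      - (w ^ 8 + 2 * w ^ 4 * y ^ 4 - 2 * w ^ 4 * z ^ 4 - y ^ 4 * z ^ 4) * x ^ 4
      - 4 * w ^ 6 * y ^ 2 * z ^ 2 * x ^ 2 - w ^ 4 * y ^ 4 * z ^ 4) =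
    z * residualCoord (-z ^ 4) (-w ^ 4) (x ^ 4) (x ^ 2 * y ^ 2 * z ^ 2 * w ^ 2) := by
  unfold residualCoord asymptoticCoord
  linear_combination z * ((z ^ 4 - 2 * w ^ 4) * x ^ 4 - w ^ 4 * z ^ 4) * h

lemma newW_eq_mul_residualCoord (h : x ^ 4 + y ^ 4 = z ^ 4 + w ^ 4) :
    w * (z ^ 4 * x ^ 8 + 4 * w ^ 2 * y ^ 2 * z ^ 2 * x ^ 6
      + (w ^ 4 * y ^ 4 + 2 * w ^ 4 * z ^ 4 - 2 * y ^ 4 * z ^ 4 - z ^ 8) * x ^ 4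
      + 4 * w ^ 2 * y ^ 2 * z ^ 6 * x ^ 2 - w ^ 4 * y ^ 4 * z ^ 4) =
    w * residualCoord (-w ^ 4) (x ^ 4) (-z ^ 4) (x ^ 2 * y ^ 2 * z ^ 2 * w ^ 2) := by
  unfold residualCoord asymptoticCoord
  linear_combination w * ((w ^ 4 - 2 * z ^ 4) * x ^ 4 - w ^ 4 * z ^ 4) * h

end NewSolution

theorem dvd_new_solution_one_general {R : Type*} [CommRing R] (X Y Z W : R) :
    letI X1 := X * ((W ^ 4 * Y ^ 4 + 2 * W ^ 4 * Z ^ 4 + Y ^ 4 * Z ^ 4) * X ^ 4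
      + 4 * W ^ 2 * X ^ 2 * Y ^ 2 * Z ^ 2 * (W ^ 4 - Z ^ 4)
      + W ^ 4 * Z ^ 4 * (W ^ 4 + 2 * Y ^ 4 + Z ^ 4))
    letI Y1 := Y * ((W ^ 4 + Z ^ 4) * X ^ 8 - (W ^ 8 - 6 * W ^ 4 * Z ^ 4 + Z ^ 8) * X ^ 4
      + W ^ 4 * Z ^ 4 * (W ^ 4 + Z ^ 4))
    letI Z1 := Z * (W ^ 4 * X ^ 8 - 4 * W ^ 2 * Y ^ 2 * Z ^ 2 * X ^ 6
      - (W ^ 8 + 2 * W ^ 4 * Y ^ 4 - 2 * W ^ 4 * Z ^ 4 - Y ^ 4 * Z ^ 4) * X ^ 4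
      - 4 * W ^ 6 * Y ^ 2 * Z ^ 2 * X ^ 2 - W ^ 4 * Y ^ 4 * Z ^ 4)
    letI W1 := W * (Z ^ 4 * X ^ 8 + 4 * W ^ 2 * Y ^ 2 * Z ^ 2 * X ^ 6
      + (W ^ 4 * Y ^ 4 + 2 * W ^ 4 * Z ^ 4 - 2 * Y ^ 4 * Z ^ 4 - Z ^ 8) * X ^ 4
      + 4 * W ^ 2 * Y ^ 2 * Z ^ 6 * X ^ 2 - W ^ 4 * Y ^ 4 * Z ^ 4)
    (X ^ 4 + Y ^ 4 - Z ^ 4 - W ^ 4) ∣ (X1 ^ 4 + Y1 ^ 4 - Z1 ^ 4 - W1 ^ 4) := by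
  rw [← Ideal.Quotient.eq_zero_iff_dvd]
  set f := Ideal.Quotient.mk (Ideal.span {X ^ 4 + Y ^ 4 - Z ^ 4 - W ^ 4})
  have h : f X ^ 4 + f Y ^ 4 = f Z ^ 4 + f W ^ 4 := by
    have hF : f (X ^ 4 + Y ^ 4 - Z ^ 4 - W ^ 4) = 0 := Ideal.Quotient.mk_singleton_self _
    simp only [map_sub, map_add, map_pow] at hF
    linear_combination hF
  simp only [map_sub, map_add, map_mul, map_pow, map_ofNat]
  rw [newX_eq_mul_residualCoord h, newY_eq_neg_mul_residualBaseCoord,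
    newZ_eq_mul_residualCoord h, newW_eq_mul_residualCoord h]
  linear_combination residual_solution h

theorem dvd_new_solution_one :
    letI X : MvPolynomial (Fin 4) ℤ := MvPolynomial.X 0
    letI Y : MvPolynomial (Fin 4) ℤ := MvPolynomial.X 1
    letI Z : MvPolynomial (Fin 4) ℤ := MvPolynomial.X 2
    letI W : MvPolynomial (Fin 4) ℤ := MvPolynomial.X 3
    letI X1 := X*((W^4*Y^4 + 2*W^4*Z^4 + Y^4*Z^4)*X^4 + 4*W^2*X^2*Y^2*Z^2*(W^4 - Z^4)
      + W^4*Z^4*(W^4 + 2*Y^4 + Z^4))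
    letI Y1 := Y*((W^4 + Z^4)*X^8 - (W^8 - 6*W^4*Z^4 + Z^8)*X^4 + W^4*Z^4*(W^4 + Z^4))
    letI Z1 := Z*(W^4*X^8 - 4*W^2*Y^2*Z^2*X^6 - (W^8 + 2*W^4*Y^4 - 2*W^4*Z^4 - Y^4*Z^4)*X^4
      - 4*W^6*Y^2*Z^2*X^2 - W^4*Y^4*Z^4)
    letI W1 := W*(Z^4*X^8 + 4*W^2*Y^2*Z^2*X^6 + (W^4*Y^4 + 2*W^4*Z^4 - 2*Y^4*Z^4 - Z^8)*X^4
      + 4*W^2*Y^2*Z^6*X^2 - W^4*Y^4*Z^4)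
    (X^4 + Y^4 - Z^4 - W^4) ∣ (X1^4 + Y1^4 - Z1^4 - W1^4) :=
  dvd_new_solution_one_general _ _ _ _
end

section
/- In the polynomial ring ℤ[X, Y, Z, W], the polynomial X^4 + Y^4 - Z^4 - W^4 divides X2^4 + Y2^4 - Z2^4 - W2^4, where X2 = X*((W^4*Y^4 + 2*W^4*Z^4 + Y^4*Z^4)*X^4 - 4*W^2*X^2*Y^2*Z^2*(W^4 - Z^4) + W^4*Z^4*(W^4 + 2*Y^4 + Z^4)), Y2 = Y*((W^4 + Z^4)*X^8 - (W^8 - 6*W^4*Z^4 + Z^8)*X^4 + W^4*Z^4*(W^4 + Z^4)), Z2 = Z*(W^4*X^8 + 4*W^2*Y^2*Z^2*X^6 - (W^8 + 2*W^4*Y^4 - 2*W^4*Z^4 - Y^4*Z^4)*X^4 + 4*W^6*Y^2*Z^2*X^2 - W^4*Y^4*Z^4), and W2 = W*(X^8*Z^4 - 4*W^2*Y^2*Z^2*X^6 + (W^4*Y^4 + 2*W^4*Z^4 - 2*Y^4*Z^4 - Z^8)*X^4 - 4*W^2*Y^2*Z^6*X^2 - W^4*Y^4*Z^4). -/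
open MvPolynomial

/-!
Put `x = X ^ 2`, `y = Y ^ 2`, `z = Z ^ 2`, `w = W ^ 2`, a point of the quadric
`x ^ 2 + y ^ 2 = z ^ 2 + w ^ 2`. The line through it in the direction
`(0, x z + y w, x y + z w, y ^ 2 - z ^ 2)` lies on the quadric, and its preimage under squaring of
coordinates is a curve of genus one on the quartic surface. The tangent plane of the surface at
`(X, Y, Z, W)` meets this curve there with multiplicity three, hence in one further rational point,
which up to signs of the coordinates is `(X2, Y2, Z2, W2)`. So `(X2, Y2, Z2, W2)` solves the quartic
equation because the point of its squares lies on the line. This becomes visible once the factors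
`X2 / X`, `Y2 / Y`, `Z2 / Z`, `W2 / W` are written as linear expressions in two forms `q`, `r` with
`q : r = x y - z w : x z - y w`.
-/

section Quadric

variable {R : Type*} [CommRing R] {x y z w : R}

lemma sq_add_sq_eq_along_ruling (h : x ^ 2 + y ^ 2 = z ^ 2 + w ^ 2) (m n : R) :
    (m * x) ^ 2 + (m * y + n * (x * z + y * w)) ^ 2
      = (m * z + n * (x * y + z * w)) ^ 2 + (m * w + n * (y ^ 2 - z ^ 2)) ^ 2 := by
  have direction_isotropic :
      (x * z + y * w) ^ 2 = (x * y + z * w) ^ 2 + (y ^ 2 - z ^ 2) ^ 2 := by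
    linear_combination (z ^ 2 - y ^ 2) * h
  have direction_orthogonal :
      y * (x * z + y * w) = z * (x * y + z * w) + w * (y ^ 2 - z ^ 2) := by
    ring
  linear_combination m ^ 2 * h + 2 * m * n * direction_orthogonal + n ^ 2 * direction_isotropic

lemma sq_mul_pow_four_add_eq (h : x ^ 2 + y ^ 2 = z ^ 2 + w ^ 2) {q r : R}
    (hqr : (x * z - y * w) * q = (x * y - z * w) * r) :
    x ^ 2 * ((x * z + y * w) * q + 2 * z * w * r) ^ 4
        + y ^ 2 * (2 * z * w * r - (x * z + y * w) * q) ^ 4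
      = z ^ 2 * ((x * z - 3 * y * w) * q + 2 * z * w * r) ^ 4
        + w ^ 2 * ((y * w - 3 * x * z) * q - 2 * z * w * r) ^ 4 := by
  set a := (x * z + y * w) * q + 2 * z * w * r with ha
  set b := 2 * z * w * r - (x * z + y * w) * q with hb
  set c := (x * z - 3 * y * w) * q + 2 * z * w * r with hc
  set d := (y * w - 3 * x * z) * q - 2 * z * w * r with hd
  set n := -(8 * y * z * w * q * r) with hn
  have b_on_line : y * b ^ 2 = a ^ 2 * y + n * (x * z + y * w) := by
    rw [ha, hb, hn]
    ring
  have c_on_line : z * c ^ 2 = a ^ 2 * z + n * (x * y + z * w) := by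
    rw [ha, hc, hn]
    linear_combination -8 * y * z * w * q * hqr
  have d_on_line : w * d ^ 2 = a ^ 2 * w + n * (y ^ 2 - z ^ 2) := by
    rw [ha, hd, hn]
    linear_combination 8 * x * z * w * q * hqr + 8 * y * z * w * q * r * h
  calc x ^ 2 * a ^ 4 + y ^ 2 * b ^ 4
      = (a ^ 2 * x) ^ 2 + (y * b ^ 2) ^ 2 := by ring
    _ = (z * c ^ 2) ^ 2 + (w * d ^ 2) ^ 2 := by
      rw [b_on_line, c_on_line, d_on_line, sq_add_sq_eq_along_ruling h]
    _ = z ^ 2 * c ^ 4 + w ^ 2 * d ^ 4 := by ring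

end Quadric

section Quartic

variable {R : Type*} [CommRing R] {X Y Z W : R}

lemma exists_new_factors_two_eq (h : X ^ 4 + Y ^ 4 = Z ^ 4 + W ^ 4) :
    ∃ q r : R,
      (X ^ 2 * Z ^ 2 - Y ^ 2 * W ^ 2) * q = (X ^ 2 * Y ^ 2 - Z ^ 2 * W ^ 2) * r ∧
      (W ^ 4 * Y ^ 4 + 2 * W ^ 4 * Z ^ 4 + Y ^ 4 * Z ^ 4) * X ^ 4
          - 4 * W ^ 2 * X ^ 2 * Y ^ 2 * Z ^ 2 * (W ^ 4 - Z ^ 4)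
          + W ^ 4 * Z ^ 4 * (W ^ 4 + 2 * Y ^ 4 + Z ^ 4)
        = (X ^ 2 * Z ^ 2 + Y ^ 2 * W ^ 2) * q + 2 * Z ^ 2 * W ^ 2 * r ∧
      (W ^ 4 + Z ^ 4) * X ^ 8 - (W ^ 8 - 6 * W ^ 4 * Z ^ 4 + Z ^ 8) * X ^ 4
          + W ^ 4 * Z ^ 4 * (W ^ 4 + Z ^ 4)
        = 2 * Z ^ 2 * W ^ 2 * r - (X ^ 2 * Z ^ 2 + Y ^ 2 * W ^ 2) * q ∧
      W ^ 4 * X ^ 8 + 4 * W ^ 2 * Y ^ 2 * Z ^ 2 * X ^ 6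
          - (W ^ 8 + 2 * W ^ 4 * Y ^ 4 - 2 * W ^ 4 * Z ^ 4 - Y ^ 4 * Z ^ 4) * X ^ 4
          + 4 * W ^ 6 * Y ^ 2 * Z ^ 2 * X ^ 2 - W ^ 4 * Y ^ 4 * Z ^ 4
        = (X ^ 2 * Z ^ 2 - 3 * Y ^ 2 * W ^ 2) * q + 2 * Z ^ 2 * W ^ 2 * r ∧
      X ^ 8 * Z ^ 4 - 4 * W ^ 2 * Y ^ 2 * Z ^ 2 * X ^ 6
          + (W ^ 4 * Y ^ 4 + 2 * W ^ 4 * Z ^ 4 - 2 * Y ^ 4 * Z ^ 4 - Z ^ 8) * X ^ 4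
          - 4 * W ^ 2 * Y ^ 2 * Z ^ 6 * X ^ 2 - W ^ 4 * Y ^ 4 * Z ^ 4
        = (Y ^ 2 * W ^ 2 - 3 * X ^ 2 * Z ^ 2) * q - 2 * Z ^ 2 * W ^ 2 * r := by
  -- The claimed equations force `q = (X2 / X - Z2 / Z) / (4 y w)` and
  -- `r = (X2 / X + Y2 / Y) / (4 z w)`; these are representatives modulo `h`.
  refine ⟨X ^ 2 * Z ^ 2 * (Y ^ 4 - 3 * W ^ 4) + Y ^ 2 * W ^ 2 * (X ^ 4 + Z ^ 4),
    Z ^ 2 * W ^ 2 * (3 * X ^ 4 + Y ^ 4) - X ^ 2 * Y ^ 2 * (W ^ 4 - Z ^ 4), ?_, ?_, ?_, ?_, ?_⟩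
  · linear_combination -2 * X ^ 2 * Y ^ 2 * Z ^ 2 * W ^ 2 * h
  · linear_combination -Z ^ 2 * W ^ 2 * (X ^ 2 * Y ^ 2 + Z ^ 2 * W ^ 2) * h
  · linear_combination
      (X ^ 4 * Z ^ 4 + X ^ 4 * W ^ 4 + X ^ 2 * Y ^ 2 * Z ^ 2 * W ^ 2 - Z ^ 4 * W ^ 4) * h
  · linear_combination X ^ 2 * W ^ 2 * (X ^ 2 * W ^ 2 + 3 * Y ^ 2 * Z ^ 2) * h
  · linear_combination X ^ 2 * Z ^ 2 * (X ^ 2 * Z ^ 2 - Y ^ 2 * W ^ 2) * h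

end Quartic

theorem dvd_new_solution_two_general {R : Type*} [CommRing R] (X Y Z W : R) :
    letI X2 := X * ((W ^ 4 * Y ^ 4 + 2 * W ^ 4 * Z ^ 4 + Y ^ 4 * Z ^ 4) * X ^ 4
        - 4 * W ^ 2 * X ^ 2 * Y ^ 2 * Z ^ 2 * (W ^ 4 - Z ^ 4)
        + W ^ 4 * Z ^ 4 * (W ^ 4 + 2 * Y ^ 4 + Z ^ 4))
    letI Y2 := Y * ((W ^ 4 + Z ^ 4) * X ^ 8 - (W ^ 8 - 6 * W ^ 4 * Z ^ 4 + Z ^ 8) * X ^ 4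
        + W ^ 4 * Z ^ 4 * (W ^ 4 + Z ^ 4))
    letI Z2 := Z * (W ^ 4 * X ^ 8 + 4 * W ^ 2 * Y ^ 2 * Z ^ 2 * X ^ 6
        - (W ^ 8 + 2 * W ^ 4 * Y ^ 4 - 2 * W ^ 4 * Z ^ 4 - Y ^ 4 * Z ^ 4) * X ^ 4
        + 4 * W ^ 6 * Y ^ 2 * Z ^ 2 * X ^ 2 - W ^ 4 * Y ^ 4 * Z ^ 4)
    letI W2 := W * (X ^ 8 * Z ^ 4 - 4 * W ^ 2 * Y ^ 2 * Z ^ 2 * X ^ 6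
        + (W ^ 4 * Y ^ 4 + 2 * W ^ 4 * Z ^ 4 - 2 * Y ^ 4 * Z ^ 4 - Z ^ 8) * X ^ 4
        - 4 * W ^ 2 * Y ^ 2 * Z ^ 6 * X ^ 2 - W ^ 4 * Y ^ 4 * Z ^ 4)
    (X ^ 4 + Y ^ 4 - Z ^ 4 - W ^ 4) ∣ (X2 ^ 4 + Y2 ^ 4 - Z2 ^ 4 - W2 ^ 4) := by
  rw [← Ideal.Quotient.eq_zero_iff_dvd]
  set φ := Ideal.Quotient.mk (Ideal.span {X ^ 4 + Y ^ 4 - Z ^ 4 - W ^ 4})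
  have hφ : φ (X ^ 4 + Y ^ 4 - Z ^ 4 - W ^ 4) = 0 := Ideal.Quotient.mk_singleton_self _
  have quartic : φ X ^ 4 + φ Y ^ 4 = φ Z ^ 4 + φ W ^ 4 := by
    simp only [map_add, map_sub, map_pow] at hφ
    linear_combination hφ
  have quadric : (φ X ^ 2) ^ 2 + (φ Y ^ 2) ^ 2 = (φ Z ^ 2) ^ 2 + (φ W ^ 2) ^ 2 := by
    linear_combination quartic
  obtain ⟨q, r, hqr, hX, hY, hZ, hW⟩ := exists_new_factors_two_eq quartic
  simp only [map_add, map_sub, map_mul, map_pow, map_ofNat, hX, hY, hZ, hW]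
  linear_combination sq_mul_pow_four_add_eq quadric hqr

theorem dvd_new_solution_two :
    letI X : MvPolynomial (Fin 4) ℤ := MvPolynomial.X 0
    letI Y : MvPolynomial (Fin 4) ℤ := MvPolynomial.X 1
    letI Z : MvPolynomial (Fin 4) ℤ := MvPolynomial.X 2
    letI W : MvPolynomial (Fin 4) ℤ := MvPolynomial.X 3
    letI X2 := X*((W^4*Y^4 + 2*W^4*Z^4 + Y^4*Z^4)*X^4 - 4*W^2*X^2*Y^2*Z^2*(W^4 - Z^4)
      + W^4*Z^4*(W^4 + 2*Y^4 + Z^4))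
    letI Y2 := Y*((W^4 + Z^4)*X^8 - (W^8 - 6*W^4*Z^4 + Z^8)*X^4 + W^4*Z^4*(W^4 + Z^4))
    letI Z2 := Z*(W^4*X^8 + 4*W^2*Y^2*Z^2*X^6 - (W^8 + 2*W^4*Y^4 - 2*W^4*Z^4 - Y^4*Z^4)*X^4
      + 4*W^6*Y^2*Z^2*X^2 - W^4*Y^4*Z^4)
    letI W2 := W*(X^8*Z^4 - 4*W^2*Y^2*Z^2*X^6 + (W^4*Y^4 + 2*W^4*Z^4 - 2*Y^4*Z^4 - Z^8)*X^4
      - 4*W^2*Y^2*Z^6*X^2 - W^4*Y^4*Z^4)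
    (X^4 + Y^4 - Z^4 - W^4) ∣ (X2^4 + Y2^4 - Z2^4 - W2^4) :=
  dvd_new_solution_two_general _ _ _ _
end

section
/- Let X, Y, Z, W be integers (or rational numbers) satisfying X^4 + Y^4 = Z^4 + W^4. Define X1 = X*((W^4*Y^4 + 2*W^4*Z^4 + Y^4*Z^4)*X^4 + 4*W^2*X^2*Y^2*Z^2*(W^4 - Z^4) + W^4*Z^4*(W^4 + 2*Y^4 + Z^4)), Y1 = Y*((W^4 + Z^4)*X^8 - (W^8 - 6*W^4*Z^4 + Z^8)*X^4 + W^4*Z^4*(W^4 + Z^4)), Z1 = Z*(W^4*X^8 - 4*W^2*Y^2*Z^2*X^6 - (W^8 + 2*W^4*Y^4 - 2*W^4*Z^4 - Y^4*Z^4)*X^4 - 4*W^6*Y^2*Z^2*X^2 - W^4*Y^4*Z^4), and W1 = W*(Z^4*X^8 + 4*W^2*Y^2*Z^2*X^6 + (W^4*Y^4 + 2*W^4*Z^4 - 2*Y^4*Z^4 - Z^8)*X^4 + 4*W^2*Y^2*Z^6*X^2 - W^4*Y^4*Z^4). Then X1^4 + Y1^4 = Z1^4 + W1^4. -/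
/-!
Let `(x, y, z, w)` be a point of the surface `A x⁴ + B y⁴ + C z⁴ + D w⁴ = 0`, so that the weights
`α₁, …, α₄ = A x⁴, B y⁴, C z⁴, D w⁴` satisfy `∑ αᵢ = 0`. The line through it in the direction
`(x u₁, y u₂, z u₃, w u₄)` meets the surface there with multiplicity at least three exactly when
`∑ αᵢ uᵢ = ∑ αᵢ uᵢ² = 0`. Newton's recursion then gives `∑ αᵢ uᵢ⁴ = e ∑ αᵢ uᵢ³` with `e = ∑ uᵢ`,
so the fourth intersection of the line with the surface is `(x (4 u₁ - e), …, w (4 u₄ - e))`.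

Shifting the direction by a multiple of the point makes `u₂ = 0`. What remains is a binary
quadratic form of discriminant `4 A B C D (x y z w)⁴`, whose roots are rational when `A B C D` is a
square. Richmond's formulas are the case `A = B = 1`, `C = D = -1`, up to the sign of `Y1`.
-/

section CommRing

variable {R : Type*} [CommRing R]

theorem weighted_sum_pow_four_of_moments_eq_zero {α₁ α₂ α₃ α₄ x₁ x₂ x₃ x₄ : R}
    (h₀ : α₁ + α₂ + α₃ + α₄ = 0)
    (h₁ : α₁ * x₁ + α₂ * x₂ + α₃ * x₃ + α₄ * x₄ = 0)
    (h₂ : α₁ * x₁ ^ 2 + α₂ * x₂ ^ 2 + α₃ * x₃ ^ 2 + α₄ * x₄ ^ 2 = 0) :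
    α₁ * x₁ ^ 4 + α₂ * x₂ ^ 4 + α₃ * x₃ ^ 4 + α₄ * x₄ ^ 4 =
      (x₁ + x₂ + x₃ + x₄) * (α₁ * x₁ ^ 3 + α₂ * x₂ ^ 3 + α₃ * x₃ ^ 3 + α₄ * x₄ ^ 3) := by
  -- Each `xᵢ` is a root of `∏ (T - xⱼ)`, whose coefficients are the elementary symmetric functions.
  linear_combination
    -(x₁ * x₂ + x₁ * x₃ + x₁ * x₄ + x₂ * x₃ + x₂ * x₄ + x₃ * x₄) * h₂
      + (x₁ * x₂ * x₃ + x₁ * x₂ * x₄ + x₁ * x₃ * x₄ + x₂ * x₃ * x₄) * h₁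
      - x₁ * x₂ * x₃ * x₄ * h₀

theorem weighted_sum_four_mul_sub_sum_pow_four {α₁ α₂ α₃ α₄ x₁ x₂ x₃ x₄ e : R}
    (h₀ : α₁ + α₂ + α₃ + α₄ = 0)
    (h₁ : α₁ * x₁ + α₂ * x₂ + α₃ * x₃ + α₄ * x₄ = 0)
    (h₂ : α₁ * x₁ ^ 2 + α₂ * x₂ ^ 2 + α₃ * x₃ ^ 2 + α₄ * x₄ ^ 2 = 0)
    (he : e = x₁ + x₂ + x₃ + x₄) :
    α₁ * (4 * x₁ - e) ^ 4 + α₂ * (4 * x₂ - e) ^ 4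
      + α₃ * (4 * x₃ - e) ^ 4 + α₄ * (4 * x₄ - e) ^ 4 = 0 := by
  have h₄ := weighted_sum_pow_four_of_moments_eq_zero h₀ h₁ h₂
  rw [← he] at h₄
  linear_combination 256 * h₄ + 96 * e ^ 2 * h₂ - 16 * e ^ 3 * h₁ + e ^ 4 * h₀

/-- The coordinate `u₁` of a solution of `p u₁ + q u₃ + r u₄ = p u₁² + q u₃² + r u₄² = 0`, the
direction of an inflectional tangent normalised by `u₂ = 0`; `u₃` and `u₄` arise by permuting
`p, q, r` cyclically. Here `s` stands for a square root of `-p q r (p + q + r)`, and `-s` gives the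
other inflectional tangent. -/
def inflectionCoord (p q r s : R) : R :=
  q * r * (2 * p - q - r) + s * (q - r)

theorem weighted_sum_inflectionCoord (p q r s : R) :
    p * inflectionCoord p q r s + q * inflectionCoord q r p s
      + r * inflectionCoord r p q s = 0 := by
  simp only [inflectionCoord]
  ring

theorem weighted_sum_inflectionCoord_sq {p q r s : R} (hs : s ^ 2 = -(p * q * r * (p + q + r))) :
    p * inflectionCoord p q r s ^ 2 + q * inflectionCoord q r p s ^ 2
      + r * inflectionCoord r p q s ^ 2 = 0 := by
  simp only [inflectionCoord]
  linear_combination (p * (q - r) ^ 2 + q * (r - p) ^ 2 + r * (p - q) ^ 2) * hs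

theorem diagonal_quartic_residual_point {A B C D n x y z w u₁ u₃ u₄ e : R}
    (h : A * x ^ 4 + B * y ^ 4 + C * z ^ 4 + D * w ^ 4 = 0)
    (hn : n ^ 2 = A * B * C * D)
    (hu₁ : u₁ = inflectionCoord (A * x ^ 4) (C * z ^ 4) (D * w ^ 4) (n * (x * y * z * w) ^ 2))
    (hu₃ : u₃ = inflectionCoord (C * z ^ 4) (D * w ^ 4) (A * x ^ 4) (n * (x * y * z * w) ^ 2))
    (hu₄ : u₄ = inflectionCoord (D * w ^ 4) (A * x ^ 4) (C * z ^ 4) (n * (x * y * z * w) ^ 2))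
    (he : e = u₁ + u₃ + u₄) :
    A * (x * (4 * u₁ - e)) ^ 4 + B * (y * e) ^ 4
      + C * (z * (4 * u₃ - e)) ^ 4 + D * (w * (4 * u₄ - e)) ^ 4 = 0 := by
  have hs : (n * (x * y * z * w) ^ 2) ^ 2 =
      -(A * x ^ 4 * (C * z ^ 4) * (D * w ^ 4) * (A * x ^ 4 + C * z ^ 4 + D * w ^ 4)) := by
    linear_combination (x * y * z * w) ^ 4 * hn + A * x ^ 4 * (C * z ^ 4) * (D * w ^ 4) * h
  have h₁ := weighted_sum_inflectionCoord (A * x ^ 4) (C * z ^ 4) (D * w ^ 4)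
    (n * (x * y * z * w) ^ 2)
  have h₂ := weighted_sum_inflectionCoord_sq hs
  rw [← hu₁, ← hu₃, ← hu₄] at h₁ h₂
  have residual := weighted_sum_four_mul_sub_sum_pow_four
    (x₁ := u₁) (x₂ := 0) (x₃ := u₃) (x₄ := u₄) (e := e)
    h (by linear_combination h₁) (by linear_combination h₂) (by linear_combination he)
  linear_combination residual

theorem new_solution_one_general {X Y Z W X1 Y1 Z1 W1 : R}
    (h : X ^ 4 + Y ^ 4 = Z ^ 4 + W ^ 4)
    (hX1 : X1 = X * ((W ^ 4 * Y ^ 4 + 2 * W ^ 4 * Z ^ 4 + Y ^ 4 * Z ^ 4) * X ^ 4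
      + 4 * W ^ 2 * X ^ 2 * Y ^ 2 * Z ^ 2 * (W ^ 4 - Z ^ 4)
      + W ^ 4 * Z ^ 4 * (W ^ 4 + 2 * Y ^ 4 + Z ^ 4)))
    (hY1 : Y1 = Y * ((W ^ 4 + Z ^ 4) * X ^ 8 - (W ^ 8 - 6 * W ^ 4 * Z ^ 4 + Z ^ 8) * X ^ 4
      + W ^ 4 * Z ^ 4 * (W ^ 4 + Z ^ 4)))
    (hZ1 : Z1 = Z * (W ^ 4 * X ^ 8 - 4 * W ^ 2 * Y ^ 2 * Z ^ 2 * X ^ 6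
      - (W ^ 8 + 2 * W ^ 4 * Y ^ 4 - 2 * W ^ 4 * Z ^ 4 - Y ^ 4 * Z ^ 4) * X ^ 4
      - 4 * W ^ 6 * Y ^ 2 * Z ^ 2 * X ^ 2 - W ^ 4 * Y ^ 4 * Z ^ 4))
    (hW1 : W1 = W * (Z ^ 4 * X ^ 8 + 4 * W ^ 2 * Y ^ 2 * Z ^ 2 * X ^ 6
      + (W ^ 4 * Y ^ 4 + 2 * W ^ 4 * Z ^ 4 - 2 * Y ^ 4 * Z ^ 4 - Z ^ 8) * X ^ 4
      + 4 * W ^ 2 * Y ^ 2 * Z ^ 6 * X ^ 2 - W ^ 4 * Y ^ 4 * Z ^ 4)) :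
    X1 ^ 4 + Y1 ^ 4 = Z1 ^ 4 + W1 ^ 4 := by
  obtain ⟨u₁, hu₁⟩ : ∃ u, u = inflectionCoord (X ^ 4) (-Z ^ 4) (-W ^ 4) ((X * Y * Z * W) ^ 2) :=
    ⟨_, rfl⟩
  obtain ⟨u₃, hu₃⟩ : ∃ u, u = inflectionCoord (-Z ^ 4) (-W ^ 4) (X ^ 4) ((X * Y * Z * W) ^ 2) :=
    ⟨_, rfl⟩
  obtain ⟨u₄, hu₄⟩ : ∃ u, u = inflectionCoord (-W ^ 4) (X ^ 4) (-Z ^ 4) ((X * Y * Z * W) ^ 2) :=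
    ⟨_, rfl⟩
  obtain ⟨e, he⟩ : ∃ e, e = u₁ + u₃ + u₄ := ⟨_, rfl⟩
  have residual := diagonal_quartic_residual_point (A := 1) (B := 1) (C := -1) (D := -1) (n := 1)
    (x := X) (y := Y) (z := Z) (w := W) (by linear_combination h) (by ring)
    (by simpa using hu₁) (by simpa using hu₃) (by simpa using hu₄) he
  simp only [inflectionCoord] at hu₁ hu₃ hu₄
  -- The `uᵢ` do not involve the weight `Y ^ 4`; `h` eliminates it from the given formulas.
  have hX : X1 = X * (4 * u₁ - e) := by
    rw [he, hu₁, hu₃, hu₄]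
    linear_combination hX1 + X * ((W ^ 4 + Z ^ 4) * X ^ 4 + 2 * Z ^ 4 * W ^ 4) * h
  have hY : Y1 = Y * e := by rw [he, hu₁, hu₃, hu₄]; linear_combination hY1
  have hZ : Z1 = Z * (4 * u₃ - e) := by
    rw [he, hu₁, hu₃, hu₄]
    linear_combination hZ1 + Z * ((Z ^ 4 - 2 * W ^ 4) * X ^ 4 - Z ^ 4 * W ^ 4) * h
  have hW : W1 = W * (4 * u₄ - e) := by
    rw [he, hu₁, hu₃, hu₄]
    linear_combination hW1 + W * ((W ^ 4 - 2 * Z ^ 4) * X ^ 4 - Z ^ 4 * W ^ 4) * h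
  rw [hX, hY, hZ, hW]
  linear_combination residual

end CommRing

theorem new_solution_one (X Y Z W : ℤ)
    (h : X^4 + Y^4 = Z^4 + W^4)
    (X1 Y1 Z1 W1 : ℤ)
    (hX1 : X1 = X*((W^4*Y^4 + 2*W^4*Z^4 + Y^4*Z^4)*X^4 + 4*W^2*X^2*Y^2*Z^2*(W^4 - Z^4)
      + W^4*Z^4*(W^4 + 2*Y^4 + Z^4)))
    (hY1 : Y1 = Y*((W^4 + Z^4)*X^8 - (W^8 - 6*W^4*Z^4 + Z^8)*X^4 + W^4*Z^4*(W^4 + Z^4)))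
    (hZ1 : Z1 = Z*(W^4*X^8 - 4*W^2*Y^2*Z^2*X^6 - (W^8 + 2*W^4*Y^4 - 2*W^4*Z^4 - Y^4*Z^4)*X^4
      - 4*W^6*Y^2*Z^2*X^2 - W^4*Y^4*Z^4))
    (hW1 : W1 = W*(Z^4*X^8 + 4*W^2*Y^2*Z^2*X^6 + (W^4*Y^4 + 2*W^4*Z^4 - 2*Y^4*Z^4 - Z^8)*X^4
      + 4*W^2*Y^2*Z^6*X^2 - W^4*Y^4*Z^4)) :
    X1^4 + Y1^4 = Z1^4 + W1^4 :=
  new_solution_one_general h hX1 hY1 hZ1 hW1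
end

section
/- Let X, Y, Z, W be integers (or rational numbers) satisfying X^4 + Y^4 = Z^4 + W^4. Define X2 = X*((W^4*Y^4 + 2*W^4*Z^4 + Y^4*Z^4)*X^4 - 4*W^2*X^2*Y^2*Z^2*(W^4 - Z^4) + W^4*Z^4*(W^4 + 2*Y^4 + Z^4)), Y2 = Y*((W^4 + Z^4)*X^8 - (W^8 - 6*W^4*Z^4 + Z^8)*X^4 + W^4*Z^4*(W^4 + Z^4)), Z2 = Z*(W^4*X^8 + 4*W^2*Y^2*Z^2*X^6 - (W^8 + 2*W^4*Y^4 - 2*W^4*Z^4 - Y^4*Z^4)*X^4 + 4*W^6*Y^2*Z^2*X^2 - W^4*Y^4*Z^4), and W2 = W*(X^8*Z^4 - 4*W^2*Y^2*Z^2*X^6 + (W^4*Y^4 + 2*W^4*Z^4 - 2*Y^4*Z^4 - Z^8)*X^4 - 4*W^2*Y^2*Z^6*X^2 - W^4*Y^4*Z^4). Then X2^4 + Y2^4 = Z2^4 + W2^4. -/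
/-!
Write the new solution as `(X * m₀, -Y * m₃, Z * m₁, W * m₂)`, so that the claim is that the
quartic form with weights `X ^ 4, -Z ^ 4, -W ^ 4, Y ^ 4` vanishes at `(m₀, m₁, m₂, m₃)`. The old
solution corresponds to `(1, 1, 1, 1)`, where the tangent plane cuts the surface in a curve with a
node; as the product of the weights is the square of `(X * Y * Z * W) ^ 2`, the branch tangents at
the node are defined over the base ring. A point `m` lies on such a tangent when its weighted power
sums of exponents 1 and 2 vanish. The tangent meets the surface to order three at `(1, 1, 1, 1)`,
and its fourth intersection is its point with `m₀ + m₁ + m₂ + m₃ = 0`: each `mᵢ` is a root of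
`∏ⱼ (T - mⱼ)`, which then has no cubic term, so the vanishing of the weighted power sums of
exponents 0, 1 and 2 forces that of exponent 4.
-/

section WeightedPowerSums

open Polynomial

theorem sum_mul_pow_card_eq_zero {ι R : Type*} [CommRing R] (I : Finset ι) {w m : ι → R}
    (hm : ∑ i ∈ I, m i = 0) (hw : ∀ k, k + 1 < I.card → ∑ i ∈ I, w i * m i ^ k = 0) :
    ∑ i ∈ I, w i * m i ^ I.card = 0 := by
  nontriviality R
  rcases I.eq_empty_or_nonempty with rfl | hI
  · exact Finset.sum_empty
  obtain ⟨n, hn⟩ : ∃ n, I.card = n + 1 := Nat.exists_eq_add_one.mpr hI.card_pos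
  set P : R[X] := ∏ i ∈ I, (X - C (m i)) with hP
  have monic : P.Monic := monic_prod_X_sub_C m I
  have natDegree_eq : P.natDegree = n + 1 := by
    rw [hP, natDegree_finsetProd_X_sub_C_eq_card, hn]
  have coeff_n : P.coeff n = 0 := by
    have := prod_X_sub_C_coeff_card_pred I m hI.card_pos
    rwa [hm, neg_zero, hn] at this
  have eval_eq_zero : ∀ i ∈ I, P.eval (m i) = 0 := fun i hi ↦ by
    rw [hP, eval_prod]
    exact Finset.prod_eq_zero hi (by simp)
  have lower_terms : ∑ k ∈ Finset.range n, P.coeff k * ∑ i ∈ I, w i * m i ^ k = 0 :=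
    Finset.sum_eq_zero fun k hk ↦ by
      rw [hw k (by have := Finset.mem_range.mp hk; omega), mul_zero]
  calc ∑ i ∈ I, w i * m i ^ I.card
      = ∑ k ∈ Finset.range (n + 2), P.coeff k * ∑ i ∈ I, w i * m i ^ k := by
        have leading : P.coeff (n + 1) = 1 := natDegree_eq ▸ monic.coeff_natDegree
        rw [Finset.sum_range_succ, Finset.sum_range_succ, lower_terms, coeff_n, leading, hn]
        ring
    _ = ∑ i ∈ I, w i * P.eval (m i) := by
        simp only [eval_eq_sum_range, natDegree_eq, Finset.mul_sum]
        rw [Finset.sum_comm]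
        simp only [mul_left_comm]
    _ = 0 := Finset.sum_eq_zero fun i hi ↦ by rw [eval_eq_zero i hi, mul_zero]

end WeightedPowerSums

section Richmond

variable {R : Type*} [CommRing R] {a b c d s : R}

/-- The fourth intersection of the surface
`a * m₀ ^ 4 + b * m₁ ^ 4 + c * m₂ ^ 4 + d * m₃ ^ 4 = 0` with one of its two nodal tangents at
`(1, 1, 1, 1)`, where `a + b + c + d = 0` and `s ^ 2 = a * b * c * d`; replacing `s` by `-s` gives
the other tangent. The first three components are cyclic permutations of each other. -/
def richmondPoint (a b c s : R) : Fin 4 → R :=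
  ![(b + c) * (a * (a + b + c) - 3 * b * c) + 4 * s * (c - b),
    (c + a) * (b * (a + b + c) - 3 * c * a) + 4 * s * (a - c),
    (a + b) * (c * (a + b + c) - 3 * a * b) + 4 * s * (b - a),
    (a + b + c) * (a * b + b * c + c * a) - 9 * a * b * c]

theorem sum_richmondPoint (a b c s : R) : ∑ i, richmondPoint a b c s i = 0 := by
  simp only [richmondPoint, Fin.sum_univ_four, Matrix.cons_val]
  ring

theorem sum_weight_mul_richmondPoint (hsum : a + b + c + d = 0) (s : R) :
    ∑ i, ![a, b, c, d] i * richmondPoint a b c s i = 0 := by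
  simp only [richmondPoint, Fin.sum_univ_four, Matrix.cons_val]
  linear_combination ((a + b + c) * (a * b + b * c + c * a) - 9 * a * b * c) * hsum

theorem sum_weight_mul_richmondPoint_sq (hsum : a + b + c + d = 0) (hs : s ^ 2 = a * b * c * d) :
    ∑ i, ![a, b, c, d] i * richmondPoint a b c s i ^ 2 = 0 := by
  obtain rfl : d = -(a + b + c) := by linear_combination hsum
  simp only [richmondPoint, Fin.sum_univ_four, Matrix.cons_val]
  linear_combination 16 * (a * (c - b) ^ 2 + b * (a - c) ^ 2 + c * (b - a) ^ 2) * hs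

theorem sum_weight_mul_richmondPoint_pow_four (hsum : a + b + c + d = 0)
    (hs : s ^ 2 = a * b * c * d) :
    ∑ i, ![a, b, c, d] i * richmondPoint a b c s i ^ 4 = 0 := by
  refine sum_mul_pow_card_eq_zero Finset.univ (sum_richmondPoint a b c s) fun k hk ↦ ?_
  have hk : k < 3 := by rw [Finset.card_univ, Fintype.card_fin] at hk; omega
  interval_cases k
  · simpa [Fin.sum_univ_four] using hsum
  · simpa only [pow_one] using sum_weight_mul_richmondPoint hsum s
  · exact sum_weight_mul_richmondPoint_sq hsum hs

theorem new_solution_two_general {X Y Z W : R} (h : X ^ 4 + Y ^ 4 = Z ^ 4 + W ^ 4)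
    {X2 Y2 Z2 W2 : R}
    (hX2 : X2 = X * ((W ^ 4 * Y ^ 4 + 2 * W ^ 4 * Z ^ 4 + Y ^ 4 * Z ^ 4) * X ^ 4
      - 4 * W ^ 2 * X ^ 2 * Y ^ 2 * Z ^ 2 * (W ^ 4 - Z ^ 4)
      + W ^ 4 * Z ^ 4 * (W ^ 4 + 2 * Y ^ 4 + Z ^ 4)))
    (hY2 : Y2 = Y * ((W ^ 4 + Z ^ 4) * X ^ 8 - (W ^ 8 - 6 * W ^ 4 * Z ^ 4 + Z ^ 8) * X ^ 4
      + W ^ 4 * Z ^ 4 * (W ^ 4 + Z ^ 4)))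
    (hZ2 : Z2 = Z * (W ^ 4 * X ^ 8 + 4 * W ^ 2 * Y ^ 2 * Z ^ 2 * X ^ 6
      - (W ^ 8 + 2 * W ^ 4 * Y ^ 4 - 2 * W ^ 4 * Z ^ 4 - Y ^ 4 * Z ^ 4) * X ^ 4
      + 4 * W ^ 6 * Y ^ 2 * Z ^ 2 * X ^ 2 - W ^ 4 * Y ^ 4 * Z ^ 4))
    (hW2 : W2 = W * (X ^ 8 * Z ^ 4 - 4 * W ^ 2 * Y ^ 2 * Z ^ 2 * X ^ 6
      + (W ^ 4 * Y ^ 4 + 2 * W ^ 4 * Z ^ 4 - 2 * Y ^ 4 * Z ^ 4 - Z ^ 8) * X ^ 4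
      - 4 * W ^ 2 * Y ^ 2 * Z ^ 6 * X ^ 2 - W ^ 4 * Y ^ 4 * Z ^ 4)) :
    X2 ^ 4 + Y2 ^ 4 = Z2 ^ 4 + W2 ^ 4 := by
  set m := richmondPoint (X ^ 4) (-Z ^ 4) (-W ^ 4) ((X * Y * Z * W) ^ 2) with hm
  have hX : X2 = X * m 0 := by
    simp only [hX2, hm, richmondPoint, Matrix.cons_val]
    linear_combination X * ((W ^ 4 + Z ^ 4) * X ^ 4 + 2 * W ^ 4 * Z ^ 4) * h
  have hZ : Z2 = Z * m 1 := by
    simp only [hZ2, hm, richmondPoint, Matrix.cons_val]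
    linear_combination Z * ((Z ^ 4 - 2 * W ^ 4) * X ^ 4 - W ^ 4 * Z ^ 4) * h
  have hW : W2 = W * m 2 := by
    simp only [hW2, hm, richmondPoint, Matrix.cons_val]
    linear_combination W * ((W ^ 4 - 2 * Z ^ 4) * X ^ 4 - W ^ 4 * Z ^ 4) * h
  have hY : Y2 = -Y * m 3 := by
    simp only [hY2, hm, richmondPoint, Matrix.cons_val]
    ring
  have on_surface : ∑ i, ![X ^ 4, -Z ^ 4, -W ^ 4, Y ^ 4] i * m i ^ 4 = 0 :=
    sum_weight_mul_richmondPoint_pow_four (by linear_combination h) (by ring)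
  simp only [Fin.sum_univ_four, Matrix.cons_val] at on_surface
  rw [hX, hY, hZ, hW]
  linear_combination on_surface

end Richmond

theorem new_solution_two (X Y Z W : ℤ)
    (h : X^4 + Y^4 = Z^4 + W^4)
    (X2 Y2 Z2 W2 : ℤ)
    (hX2 : X2 = X*((W^4*Y^4 + 2*W^4*Z^4 + Y^4*Z^4)*X^4 - 4*W^2*X^2*Y^2*Z^2*(W^4 - Z^4)
      + W^4*Z^4*(W^4 + 2*Y^4 + Z^4)))
    (hY2 : Y2 = Y*((W^4 + Z^4)*X^8 - (W^8 - 6*W^4*Z^4 + Z^8)*X^4 + W^4*Z^4*(W^4 + Z^4)))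
    (hZ2 : Z2 = Z*(W^4*X^8 + 4*W^2*Y^2*Z^2*X^6 - (W^8 + 2*W^4*Y^4 - 2*W^4*Z^4 - Y^4*Z^4)*X^4
      + 4*W^6*Y^2*Z^2*X^2 - W^4*Y^4*Z^4))
    (hW2 : W2 = W*(X^8*Z^4 - 4*W^2*Y^2*Z^2*X^6 + (W^4*Y^4 + 2*W^4*Z^4 - 2*Y^4*Z^4 - Z^8)*X^4
      - 4*W^2*Y^2*Z^6*X^2 - W^4*Y^4*Z^4)) :
    X2^4 + Y2^4 = Z2^4 + W2^4 :=
  new_solution_two_general h hX2 hY2 hZ2 hW2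
end
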